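/- Let G be a finite simple graph that is gap-free and claw-free, and let t ≥ 3 with I_t(G) ≠ 0. If e is a minimal monomial generator of the t-path ideal I_t(G), then the colon ideal (I_{t+1}(G) : e) is generated by variables. -/

import Mathlib

open MvPolynomial

/-! Graph-theoretic definitions -/

/-- A list of vertices is a path in `G`: consecutive vertices are adjacent and all
vertices are distinct. -/
def SimpleGraph.IsPathList {V : Type*} (G : SimpleGraph V) (l : List V) : Prop :=
  l.Chain' G.Adj ∧ l.Nodup

/-- The `t`-path ideal of a graph: the ideal generated by the monomials
`x_{v_1} ⋯ x_{v_t}` where `v_1 ⋯ v_t` is a path on `t` distinct vertices of `G`. -/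
noncomputable def pathIdeal {V K : Type*} [CommRing K] (G : SimpleGraph V) (t : ℕ) :
    Ideal (MvPolynomial V K) :=
  Ideal.span { p | ∃ l : List V, G.IsPathList l ∧ l.length = t ∧ p = (l.map X).prod }

/-- The edge ideal of a graph. -/
noncomputable def edgeIdeal {V K : Type*} [CommRing K] (G : SimpleGraph V) :
    Ideal (MvPolynomial V K) :=
  Ideal.span { p | ∃ u v, G.Adj u v ∧ p = X u * X v }

/-- `G` is gap-free: any two vertex-disjoint edges are joined by an edge. -/
def SimpleGraph.GapFree {V : Type*} (G : SimpleGraph V) : Prop :=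
  ∀ a b c d : V, G.Adj a b → G.Adj c d → a ≠ c → a ≠ d → b ≠ c → b ≠ d →
    (G.Adj a c ∨ G.Adj a d ∨ G.Adj b c ∨ G.Adj b d)

/-- `G` is claw-free: it has no induced `K_{1,3}`. -/
def SimpleGraph.ClawFree {V : Type*} (G : SimpleGraph V) : Prop :=
  ∀ v a b c : V, G.Adj v a → G.Adj v b → G.Adj v c → a ≠ b → a ≠ c → b ≠ c →
    (G.Adj a b ∨ G.Adj a c ∨ G.Adj b c)

/-- `G` is cricket-free: it has no induced cricket. -/
def SimpleGraph.CricketFree {V : Type*} (G : SimpleGraph V) : Prop :=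
  ¬ ∃ w1 w2 w3 w4 w5 : V,
      w1 ≠ w2 ∧ w1 ≠ w3 ∧ w1 ≠ w4 ∧ w1 ≠ w5 ∧ w2 ≠ w3 ∧ w2 ≠ w4 ∧ w2 ≠ w5 ∧
      w3 ≠ w4 ∧ w3 ≠ w5 ∧ w4 ≠ w5 ∧
      G.Adj w1 w3 ∧ G.Adj w2 w3 ∧ G.Adj w3 w4 ∧ G.Adj w3 w5 ∧ G.Adj w4 w5 ∧
      ¬ G.Adj w1 w2 ∧ ¬ G.Adj w1 w4 ∧ ¬ G.Adj w1 w5 ∧ ¬ G.Adj w2 w4 ∧ ¬ G.Adj w2 w5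

/-- `w : Fin n → V` is an induced cycle of length `n` in `H`. -/
def SimpleGraph.IsInducedCycle {V : Type*} (H : SimpleGraph V) {n : ℕ} (w : Fin n → V) :
    Prop :=
  3 ≤ n ∧ Function.Injective w ∧
    ∀ i j : Fin n, H.Adj (w i) (w j) ↔
      ((j : ℕ) = ((i : ℕ) + 1) % n ∨ (i : ℕ) = ((j : ℕ) + 1) % n)

/-- A graph is chordal if it has no induced cycle of length at least four. -/
def SimpleGraph.Chordal {V : Type*} (H : SimpleGraph V) : Prop :=
  ∀ (n : ℕ), 4 ≤ n → ∀ w : Fin n → V, ¬ H.IsInducedCycle w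

/-! Monomial ideals, graded Betti numbers via the Taylor complex, and
Castelnuovo–Mumford regularity. -/

/-- The monomial ideal generated by the monomials with exponent vectors `gens`. -/
noncomputable def monomialSpan {V K : Type*} [CommRing K] {k : ℕ}
    (gens : Fin k → (V →₀ ℕ)) : Ideal (MvPolynomial V K) :=
  Ideal.span (Set.range fun i => monomial (gens i) (1 : K))

/-- The total degree of an exponent vector. -/
def monomialDegree {V : Type*} (m : V →₀ ℕ) : ℕ := m.sum fun _ n => n

/-- `m` is a minimal monomial generator of the monomial ideal `I`. -/
def IsMinimalMonomialGen {V K : Type*} [CommRing K] (I : Ideal (MvPolynomial V K))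
    (m : V →₀ ℕ) : Prop :=
  monomial m (1 : K) ∈ I ∧ ∀ m' : V →₀ ℕ, m' ≤ m → m' ≠ m → monomial m' (1 : K) ∉ I

/-- The lcm of the monomials `gens i`, `i ∈ T`. -/
noncomputable def taylorLcm {V : Type*} {k : ℕ} (gens : Fin k → (V →₀ ℕ))
    (T : Finset (Fin k)) : V →₀ ℕ :=
  T.sup gens

open Classical in
/-- The boundary of a basis element of the Taylor complex of `gens`, tensored with the
residue field `K`: only the terms where the lcm is unchanged survive. -/
noncomputable def taylorBoundary {V K : Type*} [Field K] {k : ℕ}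
    (gens : Fin k → (V →₀ ℕ)) (T : Finset (Fin k)) : Finset (Fin k) →₀ K :=
  ∑ t ∈ T, if taylorLcm gens (T.erase t) = taylorLcm gens T then
      ((-1 : K) ^ (T.filter fun s => s < t).card) • Finsupp.single (T.erase t) (1 : K)
    else 0

/-- The differential of the Taylor complex of `gens` tensored with `K`. -/
noncomputable def taylorDiff {V K : Type*} [Field K] {k : ℕ}
    (gens : Fin k → (V →₀ ℕ)) : (Finset (Fin k) →₀ K) →ₗ[K] (Finset (Fin k) →₀ K) :=
  Finsupp.lsum K fun T =>
    LinearMap.toSpanSingleton K (Finset (Fin k) →₀ K) (taylorBoundary gens T)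

/-- The graded piece of the Taylor complex in homological degree `i` and internal
degree `j`. -/
noncomputable def taylorPiece {V K : Type*} [Field K] {k : ℕ}
    (gens : Fin k → (V →₀ ℕ)) (i j : ℕ) : Submodule K (Finset (Fin k) →₀ K) :=
  Submodule.span K { f | ∃ T : Finset (Fin k), T.card = i ∧
    monomialDegree (taylorLcm gens T) = j ∧ f = Finsupp.single T (1 : K) }

/-- Nonvanishing of the degree-`j` part of the `i`-th homology of the Taylor complex
of `gens` tensored with `K`; since the Taylor complex is a graded free resolution of
`S/I` (where `I` is the ideal generated by the monomials `gens`), this says exactly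
that `Tor_i^S(S/I, K)_j ≠ 0`. -/
noncomputable def taylorHomologyNonzero {V K : Type*} [Field K] {k : ℕ}
    (gens : Fin k → (V →₀ ℕ)) (i j : ℕ) : Prop :=
  ¬ (LinearMap.ker (taylorDiff (K := K) gens) ⊓ taylorPiece (K := K) gens i j ≤
      Submodule.map (taylorDiff (K := K) gens) (taylorPiece (K := K) gens (i + 1) j))

/-- For a monomial ideal `I`, `Tor_i^S(I, K)_j ≠ 0`.  (Since
`Tor_i^S(I,K) ≅ Tor_{i+1}^S(S/I,K)`, this is computed from the Taylor complex on any
family of monomial generators of `I`.) -/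
def IdealTorNonzero {V K : Type*} [Field K] (I : Ideal (MvPolynomial V K))
    (i j : ℕ) : Prop :=
  ∃ (k : ℕ) (gens : Fin k → (V →₀ ℕ)), I = monomialSpan gens ∧
    taylorHomologyNonzero (K := K) gens (i + 1) j

/-- The Castelnuovo–Mumford regularity of a monomial ideal `I`:
`reg I = max { j - i : Tor_i^S(I, K)_j ≠ 0 }`. -/
noncomputable def reg {V K : Type*} [Field K] (I : Ideal (MvPolynomial V K)) : ℕ :=
  sSup { d | ∃ i j : ℕ, IdealTorNonzero I i j ∧ d = j - i }

/-! Given a path `l` and a longer path `Q`, some vertex of `Q` off `l` can be absorbed: together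
with `l` it spans a path again. Hence every monomial of the colon ideal at `∏ x_v`, `v ∈ l`, is
divisible by a variable which itself lies in the colon ideal.

To find that vertex, let `w` be off `l`, adjacent to `c ∈ l`, and not absorbable. Claw-freeness at
`c` makes the two neighbours of `c` along `l` adjacent, so `c` can be bypassed; gap-freeness then
makes `c` the only neighbour of `w` in `l`, and the vertices of `l` not adjacent to `c` independent.
Every vertex of `l` has at most one neighbour among the latter, again by claw-freeness. The ends
of any reordering of `l` into a path are not adjacent to `c`, so by Pósa rotation an end of `l` has
just one neighbour in `l`. If no vertex of `Q` could be absorbed, then the interior of `Q`, whose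
vertices have two neighbours in `Q`, would lie in the interior of `l`, and `Q` would be no longer
than `l`. -/

section PathsInGraphs

variable {V : Type*} {G : SimpleGraph V}

/-- The vertices listed in `l` can be reordered into a path of `G`. Distinctness is not asked for:
it passes between a list and its permutations. -/
def Traceable (G : SimpleGraph V) (l : List V) : Prop :=
  ∃ l' : List V, l'.Perm l ∧ l'.IsChain G.Adj

lemma Traceable.perm {l l' : List V} (h : Traceable G l) (hp : l.Perm l') : Traceable G l' :=
  let ⟨m, hm, hchain⟩ := h
  ⟨m, hm.trans hp, hchain⟩

lemma isChain_adj_reverse {l : List V} (h : l.IsChain G.Adj) : l.reverse.IsChain G.Adj :=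
  List.isChain_reverse.2 (h.imp fun _ _ => SimpleGraph.Adj.symm)

lemma isChain_adj_posa_rotation {p y x : V} {S T : List V}
    (h : (p :: (S ++ y :: x :: T)).IsChain G.Adj) (hpx : G.Adj p x) :
    (y :: (S.reverse ++ p :: x :: T)).IsChain G.Adj := by
  obtain ⟨hS, -, hT⟩ := (List.isChain_append_cons_cons (l₁ := p :: S)).1 h
  have hS' : ((y :: S.reverse) ++ [p]).IsChain G.Adj := by simpa using isChain_adj_reverse hS
  exact (List.isChain_append_cons_cons (l₁ := y :: S.reverse)).2 ⟨hS', hpx, hT⟩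

lemma exists_adj_of_mem_of_isChain {Q : List V} {w : V} (h : Q.IsChain G.Adj)
    (hlen : 2 ≤ Q.length) (hw : w ∈ Q) : ∃ v ∈ Q, G.Adj w v := by
  obtain ⟨A, B, rfl⟩ := List.append_of_mem hw
  rcases B with _ | ⟨b, B⟩
  · rcases List.eq_nil_or_concat' A with rfl | ⟨A, a, rfl⟩
    · simp at hlen
    · rw [List.append_assoc] at h
      exact ⟨a, by simp, (List.isChain_append_cons_cons.1 h).2.1.symm⟩
  · exact ⟨b, by simp, (List.isChain_append_cons_cons.1 h).2.1⟩

lemma exists_ne_adj_adj_of_mem_interior {M : List V} {m q₁ q₂ : V}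
    (hQ : G.IsPathList (q₁ :: (M ++ [q₂]))) (hm : m ∈ M) :
    ∃ x ∈ q₁ :: (M ++ [q₂]), ∃ y ∈ q₁ :: (M ++ [q₂]), x ≠ y ∧ G.Adj m x ∧ G.Adj m y := by
  obtain ⟨A, x, y, B, hAB⟩ :
      ∃ A x y B, q₁ :: (M ++ [q₂]) = A ++ x :: m :: y :: B := by
    obtain ⟨M₁, M₂, rfl⟩ := List.append_of_mem hm
    obtain ⟨A, x, hA⟩ := (List.eq_nil_or_concat' (q₁ :: M₁)).resolve_left (by simp)
    obtain ⟨y, B, hB⟩ := List.exists_cons_of_ne_nil (l := M₂ ++ [q₂]) (by simp)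
    exact ⟨A, x, y, B, by grind⟩
  rw [hAB] at hQ ⊢
  obtain ⟨-, hxm, hmB⟩ := List.isChain_append_cons_cons.1 hQ.1
  have hxy : x ≠ y := by
    rintro rfl
    simpa [List.nodup_append] using hQ.2
  exact ⟨x, by simp, y, by simp, hxy, hxm.symm, (List.isChain_cons_cons.1 hmB).1⟩

/-- The vertex `w` lies off the path `l`, is adjacent to its vertex `c`, and yet cannot be
absorbed: no reordering of `w :: l` is a path. -/
structure IsBlockedAt (G : SimpleGraph V) (l : List V) (w c : V) : Prop where
  isChain : l.IsChain G.Adj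
  nodup : l.Nodup
  notMem : w ∉ l
  not_traceable : ¬ Traceable G (w :: l)
  mem : c ∈ l
  adj : G.Adj w c

namespace IsBlockedAt

variable {l l' A B : List V} {w c c' p q a b x y : V}

lemma of_adj (h : IsBlockedAt G l w c) (hmem : c' ∈ l) (hadj : G.Adj w c') :
    IsBlockedAt G l w c' :=
  { h with mem := hmem, adj := hadj }

lemma perm (h : IsBlockedAt G l w c) (hp : l'.Perm l) (hchain : l'.IsChain G.Adj) :
    IsBlockedAt G l' w c where
  isChain := hchain
  nodup := hp.nodup_iff.2 h.nodup
  notMem := mt hp.mem_iff.1 h.notMem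
  not_traceable := fun ht => h.not_traceable (ht.perm (hp.cons w))
  mem := hp.mem_iff.2 h.mem
  adj := h.adj

lemma reverse (h : IsBlockedAt G l w c) : IsBlockedAt G l.reverse w c :=
  h.perm l.reverse_perm (isChain_adj_reverse h.isChain)

lemma ne_of_mem (h : IsBlockedAt G l w c) (hx : x ∈ l) : w ≠ x := by
  rintro rfl
  exact h.notMem hx

lemma ne_head (h : IsBlockedAt G l w c) (hp : p ∈ l.head?) : c ≠ p := by
  rintro rfl
  obtain ⟨R, rfl⟩ := List.head?_eq_some_iff.1 hp
  exact h.not_traceable ⟨_, .refl _, List.isChain_cons_cons.2 ⟨h.adj, h.isChain⟩⟩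

lemma ne_getLast (h : IsBlockedAt G l w c) (hp : p ∈ l.getLast?) : c ≠ p :=
  h.reverse.ne_head (List.head?_reverse ▸ hp)

lemma not_adj_of_adj_next (h : IsBlockedAt G (A ++ x :: y :: B) w c) (hx : G.Adj w x) :
    ¬ G.Adj w y := by
  intro hy
  obtain ⟨hA, -, hB⟩ := List.isChain_append_cons_cons.1 h.isChain
  refine h.not_traceable ⟨A ++ x :: w :: y :: B, by classical grind, ?_⟩
  exact List.isChain_append_cons_cons.2 ⟨hA, hx.symm, List.isChain_cons_cons.2 ⟨hy, hB⟩⟩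

lemma exists_adj_neighbors (hclaw : G.ClawFree) (h : IsBlockedAt G (A ++ c :: B) w c) :
    ∃ A' a b B', A = A' ++ [a] ∧ B = b :: B' ∧ G.Adj a b ∧ ¬ G.Adj w a ∧ ¬ G.Adj w b := by
  rcases List.eq_nil_or_concat' A with rfl | ⟨A', a, rfl⟩
  · exact absurd rfl (h.ne_head (by simp))
  rcases B with _ | ⟨b, B'⟩
  · exact absurd rfl (h.ne_getLast (by simp))
  rw [List.append_assoc, List.singleton_append] at h
  obtain ⟨-, hac, hcB⟩ := List.isChain_append_cons_cons.1 h.isChain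
  have hcb : G.Adj c b := (List.isChain_cons_cons.1 hcB).1
  have hwa : ¬ G.Adj w a := fun hwa => h.not_adj_of_adj_next hwa h.adj
  have hwb : ¬ G.Adj w b :=
    IsBlockedAt.not_adj_of_adj_next (A := A' ++ [a]) (by simpa using h) h.adj
  have hab : a ≠ b := by
    rintro rfl
    simpa [List.nodup_append] using h.nodup
  refine ⟨A', a, b, B', rfl, rfl, ?_, hwa, hwb⟩
  rcases hclaw c a b w hac.symm hcb h.adj.symm hab (h.ne_of_mem (by simp)).symm
    (h.ne_of_mem (by simp)).symm with hadj | hadj | hadj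
  · exact hadj
  · exact absurd hadj.symm hwa
  · exact absurd hadj.symm hwb

lemma isChain_bypass (hclaw : G.ClawFree) (h : IsBlockedAt G (A ++ c :: B) w c) :
    (A ++ B).IsChain G.Adj := by
  obtain ⟨A', a, b, B', rfl, rfl, hab, -, -⟩ := h.exists_adj_neighbors hclaw
  have hchain := h.isChain
  rw [List.append_assoc, List.singleton_append] at hchain ⊢
  obtain ⟨hA, -, hcB⟩ := List.isChain_append_cons_cons.1 hchain
  exact List.isChain_append_cons_cons.2 ⟨hA, hab, (List.isChain_cons_cons.1 hcB).2⟩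

lemma not_adj_head (hclaw : G.ClawFree) (h : IsBlockedAt G l w c) (hp : p ∈ l.head?) :
    ¬ G.Adj c p := by
  intro hcp
  obtain ⟨A, B, rfl⟩ := List.append_of_mem h.mem
  have hA : A ≠ [] := by
    rintro rfl
    exact h.ne_head (by simp) rfl
  have hp' : (A ++ B).head? = some p := by
    simpa [List.head?_append_of_ne_nil _ hA] using hp
  refine h.not_traceable ⟨w :: c :: (A ++ B), List.perm_middle.symm.cons w, ?_⟩
  refine List.isChain_cons_cons.2 ⟨h.adj, List.isChain_cons.2 ⟨?_, h.isChain_bypass hclaw⟩⟩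
  simpa [hp'] using hcp

lemma not_adj_of_mem_right (hgap : G.GapFree) (hclaw : G.ClawFree)
    (h : IsBlockedAt G (A ++ c :: B) w c) (hc' : c' ∈ B) : ¬ G.Adj w c' := by
  intro hwc'
  obtain ⟨A, a, b, B, rfl, rfl, hab, hwa, hwb⟩ := h.exists_adj_neighbors hclaw
  have hbc' : b ≠ c' := by
    rintro rfl
    exact hwb hwc'
  obtain ⟨S, T, rfl⟩ := List.append_of_mem (List.mem_of_ne_of_mem hbc'.symm hc')
  have hac' : a ≠ c' := by
    rintro rfl
    exact hwa hwc'
  -- Detach `c'` from the path, then reinsert it next to `c`, together with `w`.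
  have hbypass : ((A ++ a :: c :: b :: S) ++ T).IsChain G.Adj := by
    refine isChain_bypass hclaw (c := c') (w := w) ?_
    simpa using h.of_adj (c' := c') (by simp) hwc'
  rw [List.append_assoc] at hbypass
  obtain ⟨hA, hac, hcS⟩ := List.isChain_append_cons_cons.1 hbypass
  obtain ⟨hcb, hbT⟩ := List.isChain_cons_cons.1 hcS
  rcases hgap a b w c' hab hwc' (h.ne_of_mem (by simp)).symm hac'
    (h.ne_of_mem (by simp)).symm hbc' with hadj | hadj | hadj | hadj
  · exact hwa hadj.symm
  · refine h.not_traceable ⟨A ++ a :: c' :: w :: c :: b :: (S ++ T), by classical grind, ?_⟩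
    exact List.isChain_append_cons_cons.2 ⟨hA, hadj, by
      simp only [List.isChain_cons_cons]
      exact ⟨hwc'.symm, h.adj, hcb, hbT⟩⟩
  · exact hwb hadj.symm
  · refine h.not_traceable ⟨A ++ a :: c :: w :: c' :: b :: (S ++ T), by classical grind, ?_⟩
    exact List.isChain_append_cons_cons.2 ⟨hA, hac, by
      simp only [List.isChain_cons_cons]
      exact ⟨h.adj.symm, hwc', hadj.symm, hbT⟩⟩

lemma unique (hgap : G.GapFree) (hclaw : G.ClawFree) (h : IsBlockedAt G l w c)
    (h' : IsBlockedAt G l w c') : c = c' := by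
  by_contra hne
  obtain ⟨A, B, rfl⟩ := List.append_of_mem h.mem
  have hc' : c' ∈ A ∨ c' ∈ B := by simpa [Ne.symm hne] using h'.mem
  rcases hc' with hA | hB
  · have hrev : IsBlockedAt G (B.reverse ++ c :: A.reverse) w c := by simpa using h.reverse
    exact hrev.not_adj_of_mem_right hgap hclaw (List.mem_reverse.2 hA) h'.adj
  · exact h.not_adj_of_mem_right hgap hclaw hB h'.adj

lemma adj_or_adj (hgap : G.GapFree) (hclaw : G.ClawFree) (h : IsBlockedAt G l w c)
    (hx : x ∈ l) (hy : y ∈ l) (hcx : c ≠ x) (hcy : c ≠ y) (hxy : G.Adj x y) :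
    G.Adj c x ∨ G.Adj c y := by
  have hw : ∀ z ∈ l, c ≠ z → ¬ G.Adj w z := fun z hz hcz hwz =>
    hcz (h.unique hgap hclaw (h.of_adj hz hwz))
  rcases hgap w c x y h.adj hxy (h.ne_of_mem hx) (h.ne_of_mem hy) hcx hcy
    with hadj | hadj | hadj
  · exact absurd hadj (hw x hx hcx)
  · exact absurd hadj (hw y hy hcy)
  · exact hadj

lemma eq_of_adj_of_adj (hgap : G.GapFree) (hclaw : G.ClawFree) (h : IsBlockedAt G l w c)
    (hp : p ∈ l) (hy : y ∈ l) (hx : x ∈ l) (hcp : c ≠ p) (hcy : c ≠ y)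
    (hnp : ¬ G.Adj c p) (hny : ¬ G.Adj c y) (hxp : G.Adj x p) (hxy : G.Adj x y) : p = y := by
  by_contra hne
  have hcx : c ≠ x := by
    rintro rfl
    exact hnp hxp
  have hxc : G.Adj x c := ((h.adj_or_adj hgap hclaw hx hp hcx hcp hxp).resolve_right hnp).symm
  rcases hclaw x c p y hxc hxp hxy hcp hcy hne with hadj | hadj | hpy
  · exact hnp hadj
  · exact hny hadj
  · exact (h.adj_or_adj hgap hclaw hp hy hcp hcy hpy).elim hnp hny

-- If the first vertex `p` is adjacent to `x` beyond `q`, then the rotated path starts at the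
-- predecessor `y` of `x`, so neither `p` nor `y` is adjacent to `c`.
lemma eq_second_of_adj_head {R : List V} (hgap : G.GapFree) (hclaw : G.ClawFree)
    (h : IsBlockedAt G (p :: q :: R) w c) (hx : x ∈ p :: q :: R) (hpx : G.Adj p x) : x = q := by
  by_contra hxq
  have hxR : x ∈ R := by simpa [hpx.ne', hxq] using hx
  obtain ⟨S', T, rfl⟩ := List.append_of_mem hxR
  obtain ⟨S, y, hS⟩ := (List.eq_nil_or_concat' (q :: S')).resolve_left (by simp)
  have hsplit : p :: q :: (S' ++ x :: T) = p :: (S ++ y :: x :: T) := by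
    rw [← List.cons_append, hS, List.append_assoc, List.singleton_append]
  rw [hsplit] at h
  have hrot : IsBlockedAt G (y :: (S.reverse ++ p :: x :: T)) w c :=
    h.perm (by classical grind) (isChain_adj_posa_rotation h.isChain hpx)
  have hyx : G.Adj y x :=
    (List.isChain_append_cons_cons (l₁ := p :: S)).1 h.isChain |>.2.1
  have hpy : p = y := h.eq_of_adj_of_adj hgap hclaw (by simp) (by simp) (by simp)
    (h.ne_head rfl) (hrot.ne_head rfl) (h.not_adj_head hclaw rfl) (hrot.not_adj_head hclaw rfl)
    hpx.symm hyx.symm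
  subst hpy
  simpa using h.nodup

lemma eq_of_adj_head (hgap : G.GapFree) (hclaw : G.ClawFree) (h : IsBlockedAt G l w c)
    (hp : p ∈ l.head?) (hx : x ∈ l) (hy : y ∈ l) (hpx : G.Adj p x) (hpy : G.Adj p y) : x = y := by
  obtain ⟨R, rfl⟩ := List.head?_eq_some_iff.1 hp
  rcases R with _ | ⟨q, R⟩
  · exact absurd (List.mem_singleton.1 hx) hpx.ne'
  · exact (h.eq_second_of_adj_head hgap hclaw hx hpx).trans
      (h.eq_second_of_adj_head hgap hclaw hy hpy).symm

end IsBlockedAt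

section Absorption

variable {l Q M : List V} {v w c p q₁ q₂ : V}

lemma IsBlockedAt.of_isPathList (hl : G.IsPathList l) (hw : w ∉ l)
    (hwl : ¬ Traceable G (w :: l)) (hc : c ∈ l) (hwc : G.Adj w c) : IsBlockedAt G l w c where
  isChain := hl.1
  nodup := hl.2
  notMem := hw
  not_traceable := hwl
  mem := hc
  adj := hwc

lemma not_adj_first_two_of_not_traceable {p q : V} {R : List V} (hclaw : G.ClawFree)
    (hl : G.IsPathList (p :: q :: R)) (hw : w ∉ p :: q :: R)
    (hwl : ¬ Traceable G (w :: p :: q :: R)) : ¬ G.Adj w p ∧ ¬ G.Adj w q := by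
  have blocked : ∀ c ∈ p :: q :: R, G.Adj w c → IsBlockedAt G (p :: q :: R) w c := fun _ =>
    IsBlockedAt.of_isPathList hl hw hwl
  have hpq : G.Adj p q := (List.isChain_cons_cons.1 hl.1).1
  exact ⟨fun hwp => (blocked p (by simp) hwp).ne_head rfl rfl,
    fun hwq => (blocked q (by simp) hwq).not_adj_head hclaw rfl hpq.symm⟩

lemma not_adj_of_not_traceable (hgap : G.GapFree) (hclaw : G.ClawFree) (hl : G.IsPathList l)
    (hlen : 2 ≤ l.length) (hw : w ∉ l) (hv : v ∉ l) (hwl : ¬ Traceable G (w :: l))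
    (hvl : ¬ Traceable G (v :: l)) : ¬ G.Adj w v := by
  intro hwv
  obtain ⟨p, q, R, rfl⟩ : ∃ p q R, l = p :: q :: R := by
    match l, hlen with
    | p :: q :: R, _ => exact ⟨p, q, R, rfl⟩
  have hpq : G.Adj p q := (List.isChain_cons_cons.1 hl.1).1
  obtain ⟨hwp, hwq⟩ := not_adj_first_two_of_not_traceable hclaw hl hw hwl
  obtain ⟨hvp, hvq⟩ := not_adj_first_two_of_not_traceable hclaw hl hv hvl
  have hjoin := hgap w v p q hwv hpq
  grind

lemma exists_mem_notMem_of_length_lt (hQ : Q.Nodup) (hlt : l.length < Q.length) :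
    ∃ w ∈ Q, w ∉ l := by
  by_contra! hsub
  exact hlt.not_ge (hQ.subperm hsub).length_le

lemma exists_eq_cons_concat_of_two_le_length {α : Type*} {l : List α} (h : 2 ≤ l.length) :
    ∃ a m b, l = a :: (m ++ [b]) := by
  rcases l with _ | ⟨a, l⟩
  · simp at h
  · rcases List.eq_nil_or_concat' l with rfl | ⟨m, b, rfl⟩
    · simp at h
    · exact ⟨a, m, b, rfl⟩

/-- Every vertex of `Q` off the path `l` is blocked at each of its neighbours in `Q`. This is how
the assumption that no vertex of `Q` can be absorbed by `l` enters the argument. -/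
def IsBlockedOn (G : SimpleGraph V) (l Q : List V) : Prop :=
  ∀ w ∈ Q, w ∉ l → ∀ v ∈ Q, G.Adj w v → IsBlockedAt G l w v

namespace IsBlockedOn

lemma of_forall_not_traceable (hgap : G.GapFree) (hclaw : G.ClawFree)
    (hl : G.IsPathList l) (hlen : 2 ≤ l.length)
    (hnot : ∀ w ∈ Q, w ∉ l → ¬ Traceable G (w :: l)) : IsBlockedOn G l Q := by
  intro w hw hwl v hv hwv
  refine IsBlockedAt.of_isPathList hl hwl (hnot w hw hwl) ?_ hwv
  by_contra hvl
  exact not_adj_of_not_traceable hgap hclaw hl hlen hwl hvl (hnot w hw hwl) (hnot v hv hvl) hwv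

lemma reverse (hblocked : IsBlockedOn G l Q) : IsBlockedOn G l.reverse Q :=
  fun w hw hwl v hv hwv => (hblocked w hw (mt List.mem_reverse.2 hwl) v hv hwv).reverse

lemma interior_subset (hgap : G.GapFree) (hclaw : G.ClawFree)
    (hblocked : IsBlockedOn G l (q₁ :: (M ++ [q₂])))
    (hQ : G.IsPathList (q₁ :: (M ++ [q₂]))) : M ⊆ l := by
  intro m hm
  by_contra hml
  obtain ⟨x, hx, y, hy, hxy, hmx, hmy⟩ := exists_ne_adj_adj_of_mem_interior hQ hm
  have hblocked_m := hblocked m (by simp [hm]) hml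
  exact hxy ((hblocked_m x hx hmx).unique hgap hclaw (hblocked_m y hy hmy))

lemma head_notMem_interior (hgap : G.GapFree) (hclaw : G.ClawFree)
    (hblocked : IsBlockedOn G l (q₁ :: (M ++ [q₂])))
    (hQ : G.IsPathList (q₁ :: (M ++ [q₂]))) (h : IsBlockedAt G l w c) (hp : p ∈ l.head?) :
    p ∉ M := by
  intro hpM
  obtain ⟨x, hx, y, hy, hxy, hpx, hpy⟩ := exists_ne_adj_adj_of_mem_interior hQ hpM
  have mem_of_adj : ∀ z ∈ q₁ :: (M ++ [q₂]), G.Adj p z → z ∈ l := by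
    intro z hz hpz
    by_contra hzl
    exact (hblocked z hz hzl p (by simp [hpM]) hpz.symm).ne_head hp rfl
  exact hxy (h.eq_of_adj_head hgap hclaw hp (mem_of_adj x hx hpx) (mem_of_adj y hy hpy) hpx hpy)

end IsBlockedOn

theorem exists_notMem_traceable_cons (hgap : G.GapFree) (hclaw : G.ClawFree)
    (hl : G.IsPathList l) (hlen : 2 ≤ l.length) (hQ : G.IsPathList Q)
    (hlt : l.length < Q.length) : ∃ w ∈ Q, w ∉ l ∧ Traceable G (w :: l) := by
  by_contra! hnot
  have hblocked := IsBlockedOn.of_forall_not_traceable hgap hclaw hl hlen hnot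
  obtain ⟨w, hw, hwl⟩ := exists_mem_notMem_of_length_lt hQ.2 hlt
  obtain ⟨c, hc, hwc⟩ := exists_adj_of_mem_of_isChain hQ.1 (by lia) hw
  have h : IsBlockedAt G l w c := hblocked w hw hwl c hc hwc
  obtain ⟨q₁, M, q₂, rfl⟩ := exists_eq_cons_concat_of_two_le_length (hlen.trans hlt.le)
  obtain ⟨p, N, r, rfl⟩ := exists_eq_cons_concat_of_two_le_length hlen
  have hp : p ∉ M := hblocked.head_notMem_interior hgap hclaw hQ h rfl
  have hr : r ∉ M :=
    hblocked.reverse.head_notMem_interior hgap hclaw hQ h.reverse (by simp)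
  have hMN : M ⊆ N := by
    intro m hm
    have hml := hblocked.interior_subset hgap hclaw hQ hm
    grind
  have hM : M.Nodup := (List.nodup_append.1 (List.nodup_cons.1 hQ.2).2).1
  have hle : M.length ≤ N.length := (hM.subperm hMN).length_le
  simp only [List.length_cons, List.length_append, List.length_nil] at hlt
  lia

end Absorption

section PathIdeal

variable {K : Type*} [CommRing K] [DecidableEq V] {l : List V} {t : ℕ}

lemma prod_map_X_eq_monomial (s : Multiset V) :
    (s.map (X : V → MvPolynomial V K)).prod = monomial (Multiset.toFinsupp s) 1 := by
  induction s using Multiset.induction with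
  | empty => simp
  | cons a s ih =>
    rw [Multiset.map_cons, Multiset.prod_cons, ih, X, monomial_mul, one_mul,
      ← Multiset.singleton_add, map_add, Multiset.toFinsupp_singleton]

lemma pathIdeal_eq_span_monomial :
    pathIdeal (K := K) G t = Ideal.span ((fun m => monomial m 1) ''
      {m | ∃ l : List V, G.IsPathList l ∧ l.length = t ∧
        Multiset.toFinsupp (l : Multiset V) = m}) := by
  have hprod (l : List V) : (l.map (X : V → MvPolynomial V K)).prod =
      monomial (Multiset.toFinsupp (l : Multiset V)) 1 := by
    simpa using prod_map_X_eq_monomial (K := K) (l : Multiset V)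
  simp only [pathIdeal, hprod]
  congr 1
  ext p
  simp [and_assoc, eq_comm]

lemma mem_pathIdeal_iff {f : MvPolynomial V K} :
    f ∈ pathIdeal G t ↔ ∀ m ∈ f.support, ∃ l : List V, G.IsPathList l ∧ l.length = t ∧
      Multiset.toFinsupp (l : Multiset V) ≤ m := by
  simp [pathIdeal_eq_span_monomial, mem_ideal_span_monomial_image, and_assoc]

lemma monomial_mem_pathIdeal (hl : G.IsPathList l) :
    monomial (Multiset.toFinsupp (l : Multiset V)) (1 : K) ∈ pathIdeal G l.length := by
  rw [pathIdeal_eq_span_monomial]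
  exact Ideal.subset_span ⟨_, ⟨l, hl, rfl, rfl⟩, rfl⟩

lemma IsMinimalMonomialGen.exists_isPathList [Nontrivial K] {e : V →₀ ℕ}
    (he : IsMinimalMonomialGen (pathIdeal (K := K) G t) e) :
    ∃ l : List V, G.IsPathList l ∧ l.length = t ∧ e = Multiset.toFinsupp (l : Multiset V) := by
  classical
  obtain ⟨l, hl, rfl, hle⟩ := mem_pathIdeal_iff.1 he.1 e (by simp [support_monomial])
  exact ⟨l, hl, rfl, by_contra fun hne => he.2 _ hle (Ne.symm hne) (monomial_mem_pathIdeal hl)⟩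

lemma ne_zero_of_toFinsupp_le_add {Q : List V} {m : V →₀ ℕ} {w : V}
    (hle : Multiset.toFinsupp (Q : Multiset V) ≤ m + Multiset.toFinsupp (l : Multiset V))
    (hwQ : w ∈ Q) (hwl : w ∉ l) : m w ≠ 0 := by
  have hlew : Q.count w ≤ m w + l.count w := by simpa using hle w
  have hcount : 0 < Q.count w := List.count_pos_iff.2 hwQ
  rw [List.count_eq_zero.2 hwl] at hlew
  lia

lemma X_mul_monomial_mem_pathIdeal {w : V} (hl : G.IsPathList l) (hwl : w ∉ l)
    (hw : Traceable G (w :: l)) :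
    (X w : MvPolynomial V K) * monomial (Multiset.toFinsupp (l : Multiset V)) 1 ∈
      pathIdeal G (l.length + 1) := by
  obtain ⟨l', hperm, hchain⟩ := hw
  have hl' : G.IsPathList l' := ⟨hchain, hperm.nodup_iff.2 (List.nodup_cons.2 ⟨hwl, hl.2⟩)⟩
  have hmonomial : (X w : MvPolynomial V K) * monomial (Multiset.toFinsupp (l : Multiset V)) 1 =
      monomial (Multiset.toFinsupp (l' : Multiset V)) 1 := by
    rw [Multiset.coe_eq_coe.2 hperm, ← prod_map_X_eq_monomial, ← prod_map_X_eq_monomial,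
      ← Multiset.cons_coe, Multiset.map_cons, Multiset.prod_cons]
  rw [hmonomial, ← List.length_cons (a := w), ← hperm.length_eq]
  exact monomial_mem_pathIdeal hl'

lemma mem_span_X_of_mul_monomial_mem_pathIdeal (hgap : G.GapFree) (hclaw : G.ClawFree)
    (hl : G.IsPathList l) (hlen : 2 ≤ l.length) {f : MvPolynomial V K}
    (hf : f * monomial (Multiset.toFinsupp (l : Multiset V)) 1 ∈ pathIdeal G (l.length + 1)) :
    f ∈ Ideal.span ((X : V → MvPolynomial V K) '' {w | w ∉ l ∧ Traceable G (w :: l)}) := by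
  refine mem_ideal_span_X_image.2 fun m hm => ?_
  have hm_add : m + Multiset.toFinsupp (l : Multiset V) ∈
      (f * monomial (Multiset.toFinsupp (l : Multiset V)) 1).support := by
    rwa [mem_support_iff, coeff_mul_monomial, mul_one, ← mem_support_iff]
  obtain ⟨Q, hQ, hQlen, hle⟩ := mem_pathIdeal_iff.1 hf _ hm_add
  obtain ⟨w, hwQ, hwl, hw⟩ := exists_notMem_traceable_cons hgap hclaw hl hlen hQ (by lia)
  exact ⟨w, ⟨hwl, hw⟩, ne_zero_of_toFinsupp_le_add hle hwQ hwl⟩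

theorem colon_pathIdeal_eq_span_X (hgap : G.GapFree) (hclaw : G.ClawFree)
    (hl : G.IsPathList l) (hlen : 2 ≤ l.length) :
    Submodule.colon (pathIdeal (K := K) G (l.length + 1))
        (Ideal.span {monomial (Multiset.toFinsupp (l : Multiset V)) (1 : K)}) =
      Ideal.span ((X : V → MvPolynomial V K) '' {w | w ∉ l ∧ Traceable G (w :: l)}) := by
  refine le_antisymm (fun f hf => ?_) (Ideal.span_le.2 ?_)
  · exact mem_span_X_of_mul_monomial_mem_pathIdeal hgap hclaw hl hlen
      (Ideal.mem_colon_span_singleton.1 hf)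
  · rintro _ ⟨w, ⟨hwl, hw⟩, rfl⟩
    exact Ideal.mem_colon_span_singleton.2 (X_mul_monomial_mem_pathIdeal hl hwl hw)

end PathIdeal

end PathsInGraphs

theorem stmt12_general {V K : Type*} [CommRing K] [Nontrivial K] (G : SimpleGraph V)
    (hgap : G.GapFree) (hclaw : G.ClawFree) (t : ℕ) (ht : 2 ≤ t)
    (e : V →₀ ℕ) (hgen : IsMinimalMonomialGen (pathIdeal (K := K) G t) e) :
    ∃ s : Set V,
      Submodule.colon (pathIdeal (K := K) G (t + 1))
          (Ideal.span {(monomial e (1 : K) : MvPolynomial V K)}) =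
        Ideal.span ((fun w => (X w : MvPolynomial V K)) '' s) := by
  classical
  obtain ⟨l, hl, rfl, rfl⟩ := hgen.exists_isPathList
  exact ⟨_, colon_pathIdeal_eq_span_X hgap hclaw hl ht⟩

/-- Let `G` be gap-free and claw-free, `t ≥ 3`, `I_t(G) ≠ 0`.  If `e` is
a minimal monomial generator of `I_t(G)`, then `(I_{t+1}(G) : e)` is generated by
variables. -/
theorem stmt12 {V K : Type*} [Fintype V] [Field K] (G : SimpleGraph V)
    (hgap : G.GapFree) (hclaw : G.ClawFree) (t : ℕ) (ht : 3 ≤ t)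
    (hnz : pathIdeal (K := K) G t ≠ ⊥)
    (e : V →₀ ℕ) (hgen : IsMinimalMonomialGen (pathIdeal (K := K) G t) e) :
    ∃ s : Set V,
      Submodule.colon (pathIdeal (K := K) G (t + 1))
          (Ideal.span {(monomial e (1 : K) : MvPolynomial V K)}) =
        Ideal.span ((fun w => (X w : MvPolynomial V K)) '' s) :=
  stmt12_general G hgap hclaw t (by lia) e hgen
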